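/- There exist constants δ > 0 and C > 0 such that for all integers N ≥ 1, all t ∈ [0,1], and all α ∈ (0, 1/2), setting M := N·α, one has |1 − (2π·α·∫_{−1/2}^{1} e^{−M·𝓕_{t,α}(y)} dy)/Q_t^N(α)| ≤ C·e^{−δ·M}/M. -/

import Mathlib

open Set Filter

noncomputable def GP : ℝ → ℝ := fun x => x * Real.log x + (1 - x) * Real.log (1 - x)

noncomputable def Gt (f0 f1 : ℝ → ℝ) (t : ℝ) : ℝ → ℝ :=
  fun x => GP x + ((1 - t) * f0 x + t * f1 x)

noncomputable def Phase (G : ℝ → ℝ) (α : ℝ) : ℝ → ℝ :=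
  fun x => (x - α) * deriv G x - (G x - G α)

noncomputable def Qnorm (G : ℝ → ℝ) (N : ℕ) (α : ℝ) : ℝ :=
  2 * Real.pi * ∫ x in (0:ℝ)..1, Real.exp (-(N : ℝ) * Phase G α x)

noncomputable def RPhase (G : ℝ → ℝ) (α : ℝ) : ℝ → ℝ :=
  fun y => (1 / α) * Phase G α (α * (1 + y))

noncomputable def Leg (G : ℝ → ℝ) (S : Set ℝ) : ℝ → ℝ :=
  fun ρ => sSup ((fun x => x * ρ - G x) '' S)

noncomputable def QQ (G : ℝ → ℝ) (N : ℕ) (α : ℝ) : ℝ :=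
  Qnorm G N α * Real.exp ((N : ℝ) * G α)

/-!
The phase `Phase G α` vanishes at `α` and has derivative `(x - α) G″(x)`. Near the endpoints `G″` is
asymptotic to `1 / (x (1 - x))`, the second derivative of the entropy `GP`, so by compactness
`x (1 - x) G″(x)` lies between constants `0 < c ≤ K`. This condition is preserved by convex
combinations, hence holds uniformly in `t`. The lower bound gives `Phase G α x ≥ c (α + x) / 16`
outside the window `(α / 2, 2 α)`, whose complement therefore contributes
`O(exp (-c N α / 16) / N)` to the norming integral. The upper bound gives
`Phase G α x ≤ 2 K (x - α)² / α` on `[α / 2, α]`, so for `η ≤ 1 / 2` the interval `[α - η α, α]`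
contributes at least `η α exp (-2 K η² N α)`. For `η` small, the quotient of the two estimates is
`O(exp (-δ N α) / (N α))`.
-/

open MeasureTheory

section Comparison

variable {G : ℝ → ℝ} {α x m : ℝ}

lemma le_of_hasDerivAt_sub_mul {H h : ℝ → ℝ}
    (hH : ∀ s ∈ uIcc α x, HasDerivAt H ((s - α) * h s) s) (hh : ∀ s ∈ uIcc α x, 0 ≤ h s) :
    H α ≤ H x := by
  have hcont : ContinuousOn H (uIcc α x) := fun s hs ↦ (hH s hs).continuousAt.continuousWithinAt
  have hderiv : ∀ s ∈ interior (uIcc α x),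
      HasDerivWithinAt H ((s - α) * h s) (interior (uIcc α x)) s :=
    fun s hs ↦ (hH s (interior_subset hs)).hasDerivWithinAt
  rcases le_total α x with hαx | hxα
  · refine monotoneOn_of_hasDerivWithinAt_nonneg (convex_uIcc α x) hcont hderiv (fun s hs ↦ ?_)
      left_mem_uIcc right_mem_uIcc hαx
    have hs' := interior_subset hs
    rw [uIcc_of_le hαx] at hs'
    exact mul_nonneg (sub_nonneg.2 hs'.1) (hh s (interior_subset hs))
  · refine antitoneOn_of_hasDerivWithinAt_nonpos (convex_uIcc α x) hcont hderiv (fun s hs ↦ ?_)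
      right_mem_uIcc left_mem_uIcc hxα
    have hs' := interior_subset hs
    rw [uIcc_of_ge hxα] at hs'
    exact mul_nonpos_of_nonpos_of_nonneg (sub_nonpos.2 hs'.2) (hh s (interior_subset hs))

lemma hasDerivAt_phase (hG : ContDiffAt ℝ 2 G x) :
    HasDerivAt (Phase G α) ((x - α) * iteratedDeriv 2 G x) x := by
  have hderiv : HasDerivAt G (deriv G x) x := (hG.differentiableAt two_ne_zero).hasDerivAt
  have hderiv2 : HasDerivAt (deriv G) (iteratedDeriv 2 G x) x := by
    rw [iteratedDeriv_succ, iteratedDeriv_one]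
    exact ((hG.derivWithin (m := 1) le_rfl).differentiableAt one_ne_zero).hasDerivAt
  exact ((((hasDerivAt_id x).sub_const α).mul hderiv2).sub (hderiv.sub_const (G α))).congr_deriv
    (by simp only [id]; ring)

lemma hasDerivAt_mul_sq_sub (m α s : ℝ) :
    HasDerivAt (fun y ↦ m / 2 * (y - α) ^ 2) ((s - α) * m) s :=
  ((((hasDerivAt_id s).sub_const α).pow 2).const_mul (m / 2)).congr_deriv
    (by simp only [id, Nat.cast_ofNat]; ring)

lemma phase_self : Phase G α α = 0 := by simp [Phase]

lemma mul_sq_le_phase (hG : ∀ s ∈ uIcc α x, ContDiffAt ℝ 2 G s)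
    (hm : ∀ s ∈ uIcc α x, m ≤ iteratedDeriv 2 G s) :
    m / 2 * (x - α) ^ 2 ≤ Phase G α x := by
  have h := le_of_hasDerivAt_sub_mul
    (H := fun s ↦ Phase G α s - m / 2 * (s - α) ^ 2) (h := fun s ↦ iteratedDeriv 2 G s - m)
    (fun s hs ↦ ((hasDerivAt_phase (hG s hs)).sub (hasDerivAt_mul_sq_sub m α s)).congr_deriv
      (mul_sub _ _ _).symm)
    (fun s hs ↦ sub_nonneg.2 (hm s hs))
  simpa [phase_self] using h

lemma phase_le_mul_sq (hG : ∀ s ∈ uIcc α x, ContDiffAt ℝ 2 G s)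
    (hm : ∀ s ∈ uIcc α x, iteratedDeriv 2 G s ≤ m) :
    Phase G α x ≤ m / 2 * (x - α) ^ 2 := by
  have h := le_of_hasDerivAt_sub_mul
    (H := fun s ↦ m / 2 * (s - α) ^ 2 - Phase G α s) (h := fun s ↦ m - iteratedDeriv 2 G s)
    (fun s hs ↦ ((hasDerivAt_mul_sq_sub m α s).sub (hasDerivAt_phase (hG s hs))).congr_deriv
      (mul_sub _ _ _).symm)
    (fun s hs ↦ sub_nonneg.2 (hm s hs))
  simpa [phase_self] using h

end Comparison

/-- The potential `G` is `C²` on `(0, 1)` and its second derivative lies between `c` and `K` times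
`1 / (x (1 - x))`, the second derivative of the reference potential `GP`. The bounds are stated in
the cleared form `x (1 - x) G″(x) ∈ [c, K]`, which is affine in `G`. -/
structure HasPinchedCurvature (G : ℝ → ℝ) (c K : ℝ) : Prop where
  contDiffAt : ∀ x ∈ Ioo (0 : ℝ) 1, ContDiffAt ℝ 2 G x
  mem_Icc : ∀ x ∈ Ioo (0 : ℝ) 1, x * (1 - x) * iteratedDeriv 2 G x ∈ Icc c K

namespace HasPinchedCurvature

section Algebra

variable {G G₀ G₁ : ℝ → ℝ} {c c' K K' : ℝ}

lemma mono (hG : HasPinchedCurvature G c K) (hc : c' ≤ c) (hK : K ≤ K') :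
    HasPinchedCurvature G c' K' where
  contDiffAt := hG.contDiffAt
  mem_Icc x hx := Icc_subset_Icc hc hK (hG.mem_Icc x hx)

lemma convexCombination (hG₀ : HasPinchedCurvature G₀ c K) (hG₁ : HasPinchedCurvature G₁ c K)
    {a b : ℝ} (ha : 0 ≤ a) (hb : 0 ≤ b) (hab : a + b = 1) :
    HasPinchedCurvature (a • G₀ + b • G₁) c K where
  contDiffAt x hx := ((hG₀.contDiffAt x hx).const_smul a).add ((hG₁.contDiffAt x hx).const_smul b)
  mem_Icc x hx := by
    have h₀ := hG₀.contDiffAt x hx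
    have h₁ := hG₁.contDiffAt x hx
    rw [iteratedDeriv_add (f := a • G₀) (g := b • G₁) (h₀.const_smul a) (h₁.const_smul b),
      iteratedDeriv_const_smul h₀, iteratedDeriv_const_smul h₁, mul_add, mul_smul_comm,
      mul_smul_comm]
    exact convex_Icc c K (hG₀.mem_Icc x hx) (hG₁.mem_Icc x hx) ha hb hab

lemma le (hG : HasPinchedCurvature G c K) : c ≤ K :=
  nonempty_Icc.1 ⟨_, hG.mem_Icc (1 / 2) (by norm_num)⟩

end Algebra

section Phase

variable {G : ℝ → ℝ} {c K α x : ℝ}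

lemma mul_sq_div_le_phase (hG : HasPinchedCurvature G c K) (hc : 0 ≤ c) (hα : α ∈ Ioo (0 : ℝ) 1)
    (hx : x ∈ Ioo (0 : ℝ) 1) : c * (x - α) ^ 2 / (2 * max α x) ≤ Phase G α x := by
  have hsub : uIcc α x ⊆ Ioo 0 1 := ordConnected_Ioo.uIcc_subset hα hx
  have hcurv : ∀ s ∈ uIcc α x, c / max α x ≤ iteratedDeriv 2 G s := fun s hs ↦ by
    obtain ⟨hs₀, hs₁⟩ := hsub hs
    have hsmax : s * (1 - s) ≤ max α x := by nlinarith [hs.2]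
    have hpos : 0 < s * (1 - s) := mul_pos hs₀ (sub_pos.2 hs₁)
    calc c / max α x ≤ c / (s * (1 - s)) := by gcongr
      _ ≤ iteratedDeriv 2 G s := (div_le_iff₀' hpos).2 (hG.mem_Icc s (hsub hs)).1
  calc c * (x - α) ^ 2 / (2 * max α x) = c / max α x / 2 * (x - α) ^ 2 := by field_simp
    _ ≤ Phase G α x := mul_sq_le_phase (fun s hs ↦ hG.contDiffAt s (hsub hs)) hcurv

lemma phase_nonneg (hG : HasPinchedCurvature G c K) (hc : 0 ≤ c) (hα : α ∈ Ioo (0 : ℝ) 1)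
    (hx : x ∈ Ioo (0 : ℝ) 1) : 0 ≤ Phase G α x := by
  have hmax : 0 < max α x := lt_max_of_lt_left hα.1
  exact le_trans (by positivity) (hG.mul_sq_div_le_phase hc hα hx)

lemma mul_add_le_phase (hG : HasPinchedCurvature G c K) (hc : 0 ≤ c) (hα : α ∈ Ioo (0 : ℝ) 1)
    (hx : x ∈ Ioo (0 : ℝ) 1 \ Ioo (α / 2) (2 * α)) : c / 16 * (α + x) ≤ Phase G α x := by
  obtain ⟨hx01, hxoff⟩ := hx
  have hmax : 0 < max α x := lt_max_of_lt_left hα.1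
  have hdist : max α x ≤ 2 * |x - α| := by
    grind
  calc c / 16 * (α + x) ≤ c / 16 * (2 * max α x) := by
        gcongr
        linarith [le_max_left α x, le_max_right α x]
    _ = c * (max α x / 2) ^ 2 / (2 * max α x) := by field_simp; ring
    _ ≤ c * (x - α) ^ 2 / (2 * max α x) := by
        rw [← sq_abs (x - α)]
        gcongr
        linarith
    _ ≤ Phase G α x := hG.mul_sq_div_le_phase hc hα hx01

lemma phase_le_mul_sq_div (hG : HasPinchedCurvature G c K) (hK : 0 ≤ K)
    (hα : α ∈ Ioc (0 : ℝ) (1 / 2)) (hx : x ∈ Icc (α / 2) α) :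
    Phase G α x ≤ 2 * K * (x - α) ^ 2 / α := by
  obtain ⟨hα₀, hα₁⟩ := hα
  have hsub : uIcc α x ⊆ Icc (α / 2) α :=
    ordConnected_Icc.uIcc_subset ⟨by linarith, le_rfl⟩ hx
  have hsub' : Icc (α / 2) α ⊆ Ioo 0 1 := Icc_subset_Ioo (by linarith) (by linarith)
  have hcurv : ∀ s ∈ uIcc α x, iteratedDeriv 2 G s ≤ 4 * K / α := fun s hs ↦ by
    obtain ⟨hs₀, hs₁⟩ := hsub hs
    have hquarter : α / 4 ≤ s * (1 - s) := by nlinarith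
    have hpos : 0 < s * (1 - s) := by linarith
    calc iteratedDeriv 2 G s ≤ K / (s * (1 - s)) :=
          (le_div_iff₀' hpos).2 (hG.mem_Icc s (hsub' (hsub hs))).2
      _ ≤ K / (α / 4) := by gcongr
      _ = 4 * K / α := by field_simp
  calc Phase G α x ≤ 4 * K / α / 2 * (x - α) ^ 2 :=
        phase_le_mul_sq (fun s hs ↦ hG.contDiffAt s (hsub' (hsub hs))) hcurv
    _ = 2 * K * (x - α) ^ 2 / α := by ring

end Phase

section Integral

variable {G : ℝ → ℝ} {c K α N : ℝ}

lemma integrableOn_exp_neg_phase (hG : HasPinchedCurvature G c K) (hc : 0 ≤ c)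
    (hα : α ∈ Ioo (0 : ℝ) 1) (hN : 0 ≤ N) :
    IntegrableOn (fun x ↦ Real.exp (-N * Phase G α x)) (Ioo 0 1) := by
  have hcont : ContinuousOn (fun x ↦ Real.exp (-N * Phase G α x)) (Ioo 0 1) := fun x hx ↦
    ((hasDerivAt_phase (hG.contDiffAt x hx)).continuousAt.const_mul (-N)).rexp.continuousWithinAt
  refine IntegrableOn.of_bound (by simp) (hcont.aestronglyMeasurable measurableSet_Ioo) 1
    (ae_restrict_of_forall_mem measurableSet_Ioo fun x hx ↦ ?_)
  rw [Real.norm_of_nonneg (Real.exp_pos _).le, Real.exp_le_one_iff, neg_mul, neg_nonpos]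
  exact mul_nonneg hN (hG.phase_nonneg hc hα hx)

lemma setIntegral_exp_neg_phase_offWindow_le (hG : HasPinchedCurvature G c K) (hc : 0 < c)
    (hα : α ∈ Ioo (0 : ℝ) 1) (hN : 0 < N) :
    ∫ x in Ioo (0 : ℝ) 1 \ Ioo (α / 2) (2 * α), Real.exp (-N * Phase G α x) ≤
      16 / (c * N) * Real.exp (-(c / 16) * (N * α)) := by
  have hrate : -(c / 16 * N) < 0 := by simp only [neg_neg_iff_pos]; positivity
  set tail : ℝ → ℝ := fun x ↦ Real.exp (-(c / 16) * (N * α)) * Real.exp (-(c / 16 * N) * x)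
  have htail : IntegrableOn tail (Ioi 0) := (integrableOn_exp_mul_Ioi hrate 0).const_mul _
  have hsub : Ioo (0 : ℝ) 1 \ Ioo (α / 2) (2 * α) ⊆ Ioi 0 := fun x hx ↦ hx.1.1
  calc ∫ x in Ioo (0 : ℝ) 1 \ Ioo (α / 2) (2 * α), Real.exp (-N * Phase G α x)
      ≤ ∫ x in Ioo (0 : ℝ) 1 \ Ioo (α / 2) (2 * α), tail x := by
        refine setIntegral_mono_on
          ((hG.integrableOn_exp_neg_phase hc.le hα hN.le).mono_set sdiff_subset)
          (htail.mono_set hsub) (measurableSet_Ioo.diff measurableSet_Ioo) fun x hx ↦ ?_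
        simp only [tail]
        rw [← Real.exp_add, Real.exp_le_exp]
        linarith [mul_le_mul_of_nonneg_left (hG.mul_add_le_phase hc.le hα hx) hN.le]
    _ ≤ ∫ x in Ioi 0, tail x :=
        setIntegral_mono_set htail (ae_of_all _ fun x ↦ by positivity) hsub.eventuallyLE
    _ = 16 / (c * N) * Real.exp (-(c / 16) * (N * α)) := by
        rw [integral_const_mul, integral_exp_mul_Ioi hrate, mul_zero, Real.exp_zero]
        field_simp

lemma le_setIntegral_exp_neg_phase (hG : HasPinchedCurvature G c K) (hc : 0 ≤ c)
    (hα : α ∈ Ioc (0 : ℝ) (1 / 2)) (hN : 0 ≤ N) {η : ℝ} (hη : η ∈ Icc (0 : ℝ) (1 / 2)) :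
    η * α * Real.exp (-(2 * K * η ^ 2) * (N * α)) ≤
      ∫ x in Ioo 0 1, Real.exp (-N * Phase G α x) := by
  obtain ⟨hα₀, hα₁⟩ := hα
  obtain ⟨hη₀, hη₁⟩ := hη
  have hK : 0 ≤ K := hc.trans hG.le
  have hint := hG.integrableOn_exp_neg_phase hc ⟨hα₀, by linarith⟩ hN
  have hhalf : α / 2 ≤ α - η * α := by nlinarith
  have hsub : Icc (α - η * α) α ⊆ Ioo 0 1 := Icc_subset_Ioo (by linarith) (by linarith)
  have hphase : ∀ x ∈ Icc (α - η * α) α, Phase G α x ≤ 2 * K * η ^ 2 * α := fun x hx ↦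
    calc Phase G α x ≤ 2 * K * (x - α) ^ 2 / α :=
          hG.phase_le_mul_sq_div hK ⟨hα₀, hα₁⟩ ⟨hhalf.trans hx.1, hx.2⟩
      _ = 2 * K * (α - x) ^ 2 / α := by ring
      _ ≤ 2 * K * (η * α) ^ 2 / α := by
          gcongr
          · linarith [hx.2]
          · linarith [hx.1]
      _ = 2 * K * η ^ 2 * α := by field_simp
  calc η * α * Real.exp (-(2 * K * η ^ 2) * (N * α))
      = Real.exp (-(2 * K * η ^ 2) * (N * α)) * volume.real (Icc (α - η * α) α) := by
        rw [Real.volume_real_Icc_of_le (by nlinarith)]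
        ring
    _ ≤ ∫ x in Icc (α - η * α) α, Real.exp (-N * Phase G α x) := by
        refine setIntegral_ge_of_const_le_real measurableSet_Icc (by simp) (fun x hx ↦ ?_)
          (hint.mono_set hsub)
        rw [Real.exp_le_exp]
        linarith [mul_le_mul_of_nonneg_left (hphase x hx) hN]
    _ ≤ ∫ x in Ioo 0 1, Real.exp (-N * Phase G α x) :=
        setIntegral_mono_set hint (ae_of_all _ fun x ↦ (Real.exp_pos _).le) hsub.eventuallyLE

-- On the window of relative width `η = c / (8 K) ≤ 1 / 8`, the exponent loses at most
-- `2 K η² ≤ c / 32` per unit of `N α`, half of the decay rate `c / 16` available off the window.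
lemma le_setIntegral_exp_neg_phase_of_pos (hG : HasPinchedCurvature G c K) (hc : 0 < c)
    (hα : α ∈ Ioc (0 : ℝ) (1 / 2)) (hN : 0 ≤ N) :
    c / (8 * K) * α * Real.exp (-(c / 32) * (N * α)) ≤
      ∫ x in Ioo 0 1, Real.exp (-N * Phase G α x) := by
  have hK : 0 < K := hc.trans_le hG.le
  have hα₀ : 0 < α := hα.1
  have hη : c / (8 * K) ≤ 1 / 8 := by
    rw [div_le_div_iff₀ (by positivity) (by norm_num)]
    linarith [hG.le]
  have hloss : 2 * K * (c / (8 * K)) ^ 2 ≤ c / 32 := by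
    calc 2 * K * (c / (8 * K)) ^ 2 = c / 4 * (c / (8 * K)) := by field_simp; norm_num
      _ ≤ c / 4 * (1 / 8) := by gcongr
      _ = c / 32 := by ring
  calc c / (8 * K) * α * Real.exp (-(c / 32) * (N * α))
      ≤ c / (8 * K) * α * Real.exp (-(2 * K * (c / (8 * K)) ^ 2) * (N * α)) := by gcongr
    _ ≤ ∫ x in Ioo 0 1, Real.exp (-N * Phase G α x) :=
        hG.le_setIntegral_exp_neg_phase hc.le hα hN ⟨by positivity, by linarith⟩

lemma one_sub_integral_div_integral_eq (hG : HasPinchedCurvature G c K) (hc : 0 ≤ c)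
    (hα : α ∈ Ioc (0 : ℝ) (1 / 2)) (hN : 0 ≤ N) :
    1 - (∫ x in (α / 2)..(2 * α), Real.exp (-N * Phase G α x)) /
        (∫ x in (0 : ℝ)..1, Real.exp (-N * Phase G α x)) =
      (∫ x in Ioo (0 : ℝ) 1 \ Ioo (α / 2) (2 * α), Real.exp (-N * Phase G α x)) /
        ∫ x in Ioo (0 : ℝ) 1, Real.exp (-N * Phase G α x) := by
  obtain ⟨hα₀, hα₁⟩ := hα
  have hpos : 0 < ∫ x in Ioo (0 : ℝ) 1, Real.exp (-N * Phase G α x) :=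
    lt_of_lt_of_le (by positivity)
      (hG.le_setIntegral_exp_neg_phase hc ⟨hα₀, hα₁⟩ hN (η := 1 / 2) (by norm_num))
  rw [setIntegral_sdiff measurableSet_Ioo
      (hG.integrableOn_exp_neg_phase hc ⟨hα₀, by linarith⟩ hN)
      (Ioo_subset_Ioo (by linarith) (by linarith)),
    sub_div, div_self hpos.ne', intervalIntegral.integral_of_le (by linarith),
    intervalIntegral.integral_of_le zero_le_one, integral_Ioc_eq_integral_Ioo,
    integral_Ioc_eq_integral_Ioo]

theorem abs_one_sub_integral_div_integral_le (hG : HasPinchedCurvature G c K) (hc : 0 < c)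
    (hα : α ∈ Ioc (0 : ℝ) (1 / 2)) (hN : 0 < N) :
    |1 - (∫ x in (α / 2)..(2 * α), Real.exp (-N * Phase G α x)) /
        (∫ x in (0 : ℝ)..1, Real.exp (-N * Phase G α x))| ≤
      128 * K / c ^ 2 * Real.exp (-(c / 32) * (N * α)) / (N * α) := by
  have hK : 0 < K := hc.trans_le hG.le
  have hα₀ : 0 < α := hα.1
  have hexp : Real.exp (-(c / 16) * (N * α)) =
      Real.exp (-(c / 32) * (N * α)) * Real.exp (-(c / 32) * (N * α)) := by
    rw [← Real.exp_add]
    ring_nf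
  rw [hG.one_sub_integral_div_integral_eq hc.le hα hN.le,
    abs_of_nonneg (div_nonneg (integral_nonneg fun x ↦ (Real.exp_pos _).le)
      (integral_nonneg fun x ↦ (Real.exp_pos _).le))]
  calc _ ≤ 16 / (c * N) * Real.exp (-(c / 16) * (N * α)) /
        (c / (8 * K) * α * Real.exp (-(c / 32) * (N * α))) :=
        div_le_div₀ (by positivity)
          (hG.setIntegral_exp_neg_phase_offWindow_le hc ⟨hα₀, by linarith [hα.2]⟩ hN)
          (by positivity) (hG.le_setIntegral_exp_neg_phase_of_pos hc hα hN.le)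
    _ = 128 * K / c ^ 2 * Real.exp (-(c / 32) * (N * α)) / (N * α) := by
        rw [hexp]
        field_simp
        norm_num

end Integral

end HasPinchedCurvature

section Potential

variable {f : ℝ → ℝ}

lemma GP_eq_neg_binEntropy : GP = -Real.binEntropy := by
  ext x
  simp only [GP, Pi.neg_apply, Real.binEntropy, Real.log_inv]
  ring

lemma contDiffAt_GP {n : WithTop ℕ∞} {x : ℝ} (hx : x ∈ Ioo (0 : ℝ) 1) : ContDiffAt ℝ n GP x := by
  have hx₀ : x ≠ 0 := hx.1.ne'
  have hx₁ : 1 - x ≠ 0 := (sub_pos.2 hx.2).ne'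
  unfold GP
  fun_prop (disch := assumption)

lemma iteratedDeriv_two_GP (x : ℝ) : iteratedDeriv 2 GP x = 1 / (x * (1 - x)) := by
  rw [GP_eq_neg_binEntropy, iteratedDeriv_neg, iteratedDeriv_eq_iterate, Real.deriv2_binEntropy,
    neg_div, neg_neg]

lemma mul_iteratedDeriv_two_GP_add (hf : ContDiff ℝ 2 f) {x : ℝ} (hx : x ∈ Ioo (0 : ℝ) 1) :
    x * (1 - x) * iteratedDeriv 2 (GP + f) x = 1 + x * (1 - x) * iteratedDeriv 2 f x := by
  have hpos : 0 < x * (1 - x) := mul_pos hx.1 (sub_pos.2 hx.2)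
  rw [iteratedDeriv_add (contDiffAt_GP hx) hf.contDiffAt, iteratedDeriv_two_GP, mul_add,
    mul_one_div_cancel hpos.ne']

lemma exists_hasPinchedCurvature_GP_add (hf : ContDiff ℝ 2 f)
    (hG : ∀ x ∈ Ioo (0 : ℝ) 1, 0 < iteratedDeriv 2 (GP + f) x) :
    ∃ c > 0, ∃ K, HasPinchedCurvature (GP + f) c K := by
  set φ : ℝ → ℝ := fun x ↦ 1 + x * (1 - x) * iteratedDeriv 2 f x
  have hcont : ContinuousOn φ (Icc 0 1) := by
    have := hf.continuous_iteratedDeriv' 2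
    fun_prop
  have hpos : ∀ x ∈ Icc (0 : ℝ) 1, 0 < φ x := fun x hx ↦ by
    rcases eq_endpoints_or_mem_Ioo_of_mem_Icc hx with rfl | rfl | hx'
    · simp [φ]
    · simp [φ]
    · simp only [φ]
      rw [← mul_iteratedDeriv_two_GP_add hf hx']
      exact mul_pos (mul_pos hx'.1 (sub_pos.2 hx'.2)) (hG x hx')
  obtain ⟨c, hc, hcφ⟩ := isCompact_Icc.exists_forall_le' hcont hpos
  obtain ⟨K, hK⟩ := isCompact_Icc.bddAbove_image hcont
  refine ⟨c, hc, K, fun x hx ↦ (contDiffAt_GP hx).add hf.contDiffAt, fun x hx ↦ ?_⟩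
  rw [mul_iteratedDeriv_two_GP_add hf hx]
  have hx' := Ioo_subset_Icc_self hx
  exact ⟨hcφ x hx', hK (mem_image_of_mem φ hx')⟩

lemma Gt_eq_convexCombination (f0 f1 : ℝ → ℝ) (t : ℝ) :
    Gt f0 f1 t = (1 - t) • (GP + f0) + t • (GP + f1) := by
  ext x
  simp only [Gt, Pi.add_apply, Pi.smul_apply, smul_eq_mul]
  ring

lemma exists_hasPinchedCurvature_Gt {f0 f1 : ℝ → ℝ} (hf0 : ContDiff ℝ 2 f0) (hf1 : ContDiff ℝ 2 f1)
    (hG0 : ∀ x ∈ Ioo (0 : ℝ) 1, 0 < iteratedDeriv 2 (Gt f0 f1 0) x)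
    (hG1 : ∀ x ∈ Ioo (0 : ℝ) 1, 0 < iteratedDeriv 2 (Gt f0 f1 1) x) :
    ∃ c > 0, ∃ K, ∀ t ∈ Icc (0 : ℝ) 1, HasPinchedCurvature (Gt f0 f1 t) c K := by
  have hGt0 : Gt f0 f1 0 = GP + f0 := by simp [Gt_eq_convexCombination]
  have hGt1 : Gt f0 f1 1 = GP + f1 := by simp [Gt_eq_convexCombination]
  obtain ⟨c₀, hc₀, K₀, hp₀⟩ := exists_hasPinchedCurvature_GP_add hf0 (hGt0 ▸ hG0)
  obtain ⟨c₁, hc₁, K₁, hp₁⟩ := exists_hasPinchedCurvature_GP_add hf1 (hGt1 ▸ hG1)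
  refine ⟨min c₀ c₁, lt_min hc₀ hc₁, max K₀ K₁, fun t ht ↦ ?_⟩
  rw [Gt_eq_convexCombination]
  exact (hp₀.mono (min_le_left _ _) (le_max_left _ _)).convexCombination
    (hp₁.mono (min_le_right _ _) (le_max_right _ _)) (sub_nonneg.2 ht.2) ht.1 (by ring)

end Potential

lemma mul_integral_exp_neg_RPhase {α : ℝ} (hα : α ≠ 0) (G : ℝ → ℝ) (N a b : ℝ) :
    α * ∫ y in a..b, Real.exp (-(N * α) * RPhase G α y) =
      ∫ x in (α * (1 + a))..(α * (1 + b)), Real.exp (-N * Phase G α x) := by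
  have hexp : ∀ y, -(N * α) * RPhase G α y = -N * Phase G α (α + α * y) := fun y ↦ by
    rw [RPhase, mul_one_add]
    field_simp
  simp_rw [hexp, mul_one_add]
  exact intervalIntegral.mul_integral_comp_add_mul
    (f := fun x ↦ Real.exp (-N * Phase G α x)) α α

theorem bergman_cp1_localization_of_norming_integral_general
    (f0 f1 : ℝ → ℝ) (hf0 : ContDiff ℝ 2 f0) (hf1 : ContDiff ℝ 2 f1)
    (hG0 : ∀ x ∈ Set.Ioo (0 : ℝ) 1, 0 < iteratedDeriv 2 (Gt f0 f1 0) x)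
    (hG1 : ∀ x ∈ Set.Ioo (0 : ℝ) 1, 0 < iteratedDeriv 2 (Gt f0 f1 1) x) :
    ∃ δ : ℝ, 0 < δ ∧ ∃ C : ℝ, 0 < C ∧
      ∀ N : ℕ, 1 ≤ N → ∀ t ∈ Set.Icc (0 : ℝ) 1, ∀ α ∈ Set.Ioc (0:ℝ) (1/2),
        |1 - (2 * Real.pi * α *
            ∫ y in (-(1:ℝ)/2)..1, Real.exp (-((N:ℝ) * α) * RPhase (Gt f0 f1 t) α y)) /
          Qnorm (Gt f0 f1 t) N α|
        ≤ C * Real.exp (-δ * ((N:ℝ) * α)) / ((N:ℝ) * α) := by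
  obtain ⟨c, hc, K, hpinched⟩ := exists_hasPinchedCurvature_Gt hf0 hf1 hG0 hG1
  have hK : 0 < K := hc.trans_le (hpinched 0 (by simp)).le
  refine ⟨c / 32, by positivity, 128 * K / c ^ 2, by positivity, fun N hN t ht α hα ↦ ?_⟩
  rw [Qnorm, mul_assoc (2 * Real.pi), mul_integral_exp_neg_RPhase hα.1.ne',
    mul_div_mul_left _ _ Real.two_pi_pos.ne', show α * (1 + -1 / 2) = α / 2 by ring,
    show α * (1 + 1) = 2 * α by ring]
  exact (hpinched t ht).abs_one_sub_integral_div_integral_le hc hα (by exact_mod_cast hN)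

theorem bergman_cp1_localization_of_norming_integral
    (f0 f1 : ℝ → ℝ) (hf0 : ContDiff ℝ (⊤ : ℕ∞) f0) (hf1 : ContDiff ℝ (⊤ : ℕ∞) f1)
    (hG0 : ∀ x ∈ Set.Ioo (0:ℝ) 1, 0 < iteratedDeriv 2 (Gt f0 f1 0) x)
    (hG1 : ∀ x ∈ Set.Ioo (0:ℝ) 1, 0 < iteratedDeriv 2 (Gt f0 f1 1) x) :
    ∃ δ : ℝ, 0 < δ ∧ ∃ C : ℝ, 0 < C ∧
      ∀ N : ℕ, 1 ≤ N → ∀ t ∈ Set.Icc (0:ℝ) 1, ∀ α ∈ Set.Ioo (0:ℝ) (1/2),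
        |1 - (2 * Real.pi * α *
            ∫ y in (-(1:ℝ)/2)..1, Real.exp (-((N:ℝ) * α) * RPhase (Gt f0 f1 t) α y)) /
          Qnorm (Gt f0 f1 t) N α|
        ≤ C * Real.exp (-δ * ((N:ℝ) * α)) / ((N:ℝ) * α) := by
  obtain ⟨δ, hδ, C, hC, hbound⟩ := bergman_cp1_localization_of_norming_integral_general f0 f1
    (hf0.of_le (by norm_cast)) (hf1.of_le (by norm_cast)) hG0 hG1
  exact ⟨δ, hδ, C, hC, fun N hN t ht α hα ↦ hbound N hN t ht α (Ioo_subset_Ioc_self hα)⟩
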